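/- Congruence form of the evaluation lemma. Let 𝒢 be a polynomial in x₁, x₂, y₁, y₂ over a field of characteristic zero which is bihomogeneous of orders (p,q), and let ℓ ≥ m ≥ 0 with ℓ−m ≤ min(p,q). Then Ω_{xy}^ℓ((x y)^m · 𝒢) − μ(p,q;ℓ,m)·Ω_{xy}^{ℓ−m}𝒢 lies in the ideal generated by (x y) = x₁y₂ − y₁x₂ in the polynomial ring, where μ(p,q;ℓ,m) = (ℓ!/(ℓ−m)!) · ((p+q−ℓ+2m+1)!/((p+q−ℓ+m+1)!)). -/

import Mathlib

/-!
Let `a = Ω`, let `b` be multiplication by `(x y)`, and let `E = ∑ Xᵢ ∂ᵢ` be the Euler operator. Then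
`h = [a, b] = E + 2` satisfies `[h, a] = -2 a` and `[h, b] = 2 b`, so up to sign the operators form
an `𝔰𝔩₂`-triple, and `[aⁿ⁺¹, b] = (n + 1) aⁿ (h - n)`. Applied to a weight vector modulo the range
of `b`, this identity trades one factor `a` and one factor `b` for a scalar; `μ` is the product of
the scalars collected from all `m` factors `b`.
-/

open MvPolynomial

/-- The Cayley Omega operator `Ω_{xy} = ∂²/∂x₁∂y₂ − ∂²/∂y₁∂x₂`, where the four
variables are indexed as `x₁ = 0`, `x₂ = 1`, `y₁ = 2`, `y₂ = 3`. -/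
noncomputable def Omega {k : Type*} [CommRing k] (G : MvPolynomial (Fin 4) k) :
    MvPolynomial (Fin 4) k :=
  pderiv (0 : Fin 4) (pderiv 3 G) - pderiv 2 (pderiv 1 G)

/-- The bracket factor `(x y) = x₁y₂ − y₁x₂`. -/
noncomputable def bracket {k : Type*} [CommRing k] : MvPolynomial (Fin 4) k :=
  X 0 * X 3 - X 2 * X 1

/-- A polynomial in `x₁, x₂, y₁, y₂` is bihomogeneous of orders `(p,q)` if it is
homogeneous of degree `p` in `(x₁,x₂)` and of degree `q` in `(y₁,y₂)`. -/
def Bihomogeneous {k : Type*} [CommRing k] (G : MvPolynomial (Fin 4) k)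
    (p q : ℕ) : Prop :=
  G.IsWeightedHomogeneous ![1, 1, 0, 0] p ∧ G.IsWeightedHomogeneous ![0, 0, 1, 1] q

/-- `μ(p,q;ℓ,m) = (ℓ!/(ℓ−m)!)·((p+q−ℓ+2m+1)!/((p+q−ℓ+m+1)!))`. -/
noncomputable def mu (p q ℓ m : ℕ) : ℚ :=
  ((ℓ.factorial : ℚ) / ((ℓ - m).factorial : ℚ)) *
    (((p + q + 2 * m + 1 - ℓ).factorial : ℚ) / ((p + q + m + 1 - ℓ).factorial : ℚ))

open Polynomial in
lemma descPochhammer_succ_eval_add_one {R : Type*} [CommRing R] (n : ℕ) (r : R) :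
    (descPochhammer R (n + 1)).eval (r + 1) = (r + 1) * (descPochhammer R n).eval r := by
  simp [descPochhammer_succ_left, eval_comp]

section LieBracket

variable {R A : Type*} [CommRing R] [Ring A] [Algebra R A]

lemma lie_pow_of_lie_eq_smul {h x : A} {c : R} (hx : ⁅h, x⁆ = c • x) (n : ℕ) :
    ⁅h, x ^ n⁆ = (n * c) • x ^ n := by
  induction n with
  | zero => simp [Ring.lie_def]
  | succ n ih =>
    have leibniz : ⁅h, x ^ n * x⁆ = ⁅h, x ^ n⁆ * x + x ^ n * ⁅h, x⁆ := by
      simp only [Ring.lie_def]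
      noncomm_ring
    rw [pow_succ, leibniz, ih, hx, smul_mul_assoc, mul_smul_comm, ← add_smul,
      Nat.cast_succ, add_one_mul]

lemma pow_succ_lie_of_lie_lie_eq_neg_two_smul {a b h : A} (hab : ⁅a, b⁆ = h)
    (hha : ⁅h, a⁆ = (-2 : R) • a) (n : ℕ) :
    ⁅a ^ (n + 1), b⁆ = ((n + 1 : ℕ) : R) • (a ^ n * (h - (n : R) • 1)) := by
  induction n with
  | zero => simp [hab]
  | succ n ih =>
    have leibniz : ⁅a * a ^ (n + 1), b⁆ = a * ⁅a ^ (n + 1), b⁆ + ⁅a, b⁆ * a ^ (n + 1) := by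
      simp only [Ring.lie_def]
      noncomm_ring
    have h_mul_pow : h * a ^ (n + 1) = a ^ (n + 1) * h + ((n + 1 : ℕ) * -2 : R) • a ^ (n + 1) := by
      rw [← lie_pow_of_lie_eq_smul hha, Ring.lie_def, add_sub_cancel]
    rw [pow_succ' a (n + 1), leibniz, ih, hab, h_mul_pow, mul_smul_comm, ← mul_assoc, ← pow_succ']
    simp only [mul_sub, mul_smul_comm, mul_one]
    push_cast
    module

end LieBracket

section WeightVector

variable {R M : Type*} [CommRing R] [AddCommGroup M] [Module R M]

lemma apply_pow_apply_of_lie_eq_smul {h x : Module.End R M} {c r : R} (hx : ⁅h, x⁆ = r • x)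
    {v : M} (hv : h v = c • v) (n : ℕ) :
    h ((x ^ n) v) = (c + n * r) • (x ^ n) v := by
  have lie_apply : h ((x ^ n) v) - (x ^ n) (h v) = (n * r) • (x ^ n) v :=
    congr($(lie_pow_of_lie_eq_smul hx n) v)
  rw [sub_eq_iff_eq_add.1 lie_apply, hv, map_smul, ← add_smul, add_comm]

lemma pow_succ_apply_apply_of_lie_lie_eq_neg_two_smul {a b h : Module.End R M} {c : R}
    (hab : ⁅a, b⁆ = h) (hha : ⁅h, a⁆ = (-2 : R) • a) {v : M} (hv : h v = c • v) (n : ℕ) :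
    (a ^ (n + 1)) (b v) = b ((a ^ (n + 1)) v) + ((n + 1 : ℕ) * (c - n)) • (a ^ n) v := by
  have lie_apply : (a ^ (n + 1)) (b v) - b ((a ^ (n + 1)) v) =
      ((n + 1 : ℕ) : R) • (a ^ n) (h v - (n : R) • v) :=
    congr($(pow_succ_lie_of_lie_lie_eq_neg_two_smul hab hha n) v)
  rw [sub_eq_iff_eq_add'.1 lie_apply, hv, ← sub_smul, map_smul, smul_smul]

/-- Evaluating `descPochhammer`, instead of using `Nat.descFactorial`, leaves the weight `c` free to
be any scalar and avoids truncated subtraction. -/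
lemma pow_apply_pow_apply_sub_smul_mem_range {a b h : Module.End R M} {c : R}
    (hab : ⁅a, b⁆ = h) (hha : ⁅h, a⁆ = (-2 : R) • a) (hhb : ⁅h, b⁆ = (2 : R) • b)
    {v : M} (hv : h v = c • v) (ℓ m : ℕ) :
    (a ^ ℓ) ((b ^ m) v) -
        (ℓ.descFactorial m * (descPochhammer R m).eval (c + 2 * m - 1 - ℓ)) • (a ^ (ℓ - m)) v ∈
      LinearMap.range b := by
  induction m generalizing ℓ with
  | zero => simp
  | succ m ih =>
    obtain _ | n := ℓ
    · simp [pow_succ' b]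
    have lower := pow_succ_apply_apply_of_lie_lie_eq_neg_two_smul hab hha
      (apply_pow_apply_of_lie_eq_smul hhb hv m) n
    have shift : c + 2 * (m + 1 : ℕ) - 1 - (n + 1 : ℕ) = (c + 2 * m - 1 - n) + 1 := by
      push_cast
      ring
    obtain ⟨w, hw⟩ := ih n
    refine ⟨(a ^ (n + 1)) ((b ^ m) v) + ((n + 1 : ℕ) * (c + m * 2 - n)) • w, ?_⟩
    rw [pow_succ' b, Module.End.mul_apply, lower, Nat.add_sub_add_right,
      Nat.succ_descFactorial_succ, shift, descPochhammer_succ_eval_add_one, map_add, map_smul, hw]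
    push_cast
    module

end WeightVector

section Euler

variable {R σ : Type*}

section CommSemiring

variable [CommSemiring R]

/-- The Euler operator `∑ Xᵢ ∂ᵢ`, encoded as the derivation fixing every variable so that `σ` may be
infinite. -/
noncomputable def eulerDerivation (R σ : Type*) [CommSemiring R] :
    Derivation R (MvPolynomial σ R) (MvPolynomial σ R) :=
  mkDerivation R X

lemma eulerDerivation_X (i : σ) : eulerDerivation R σ (X i) = X i :=
  mkDerivation_X R X i

lemma eulerDerivation_eq_sum [Fintype σ] (F : MvPolynomial σ R) :
    eulerDerivation R σ F = ∑ i, X i * pderiv i F := by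
  classical
  induction F using MvPolynomial.induction_on with
  | C r => simp
  | add F G hF hG => simp [hF, hG, mul_add, Finset.sum_add_distrib]
  | mul_X F j hF =>
    simp [hF, eulerDerivation_X, pderiv_X, Pi.single_apply, mul_add, Finset.sum_add_distrib,
      Finset.mul_sum, mul_left_comm, mul_comm F]

lemma eulerDerivation_of_isHomogeneous [Finite σ] {F : MvPolynomial σ R} {d : ℕ}
    (hF : F.IsHomogeneous d) : eulerDerivation R σ F = (d : R) • F := by
  have := Fintype.ofFinite σ
  rw [eulerDerivation_eq_sum, hF.sum_X_mul_pderiv, Nat.cast_smul_eq_nsmul]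

end CommSemiring

variable [CommRing R]

lemma lie_eulerDerivation_pderiv (i : σ) :
    ⁅eulerDerivation R σ, pderiv (R := R) i⁆ = -pderiv i := by
  refine derivation_ext fun j ↦ ?_
  obtain rfl | hji := eq_or_ne j i
  · simp [Derivation.commutator_apply, eulerDerivation_X]
  · simp [Derivation.commutator_apply, eulerDerivation_X, hji]

lemma eulerDerivation_pderiv (i : σ) (F : MvPolynomial σ R) :
    eulerDerivation R σ (pderiv i F) = pderiv i (eulerDerivation R σ F) - pderiv i F := by
  rw [sub_eq_neg_add, ← sub_eq_iff_eq_add]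
  exact congr($(lie_eulerDerivation_pderiv i) F)

end Euler

section Omega

variable {R : Type*} [CommRing R]

/-- The operator `Omega`, bundled as an endomorphism so that commutators with it make sense. -/
noncomputable def omegaEnd (R : Type*) [CommRing R] : Module.End R (MvPolynomial (Fin 4) R) :=
  (pderiv 0).toLinearMap * (pderiv 3).toLinearMap - (pderiv 2).toLinearMap * (pderiv 1).toLinearMap

/-- Multiplication by `bracket`, bundled as an endomorphism. -/
noncomputable def bracketEnd (R : Type*) [CommRing R] : Module.End R (MvPolynomial (Fin 4) R) :=
  LinearMap.mulLeft R bracket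

/-- The weight operator `E + 2` of the `𝔰𝔩₂`-triple, where `E` is the Euler operator. -/
noncomputable def weightEnd (R : Type*) [CommRing R] : Module.End R (MvPolynomial (Fin 4) R) :=
  (eulerDerivation R (Fin 4)).toLinearMap + (2 : R) • 1

lemma omegaEnd_apply (F : MvPolynomial (Fin 4) R) : omegaEnd R F = Omega F := rfl

lemma bracketEnd_apply (F : MvPolynomial (Fin 4) R) : bracketEnd R F = bracket * F := rfl

lemma weightEnd_apply (F : MvPolynomial (Fin 4) R) :
    weightEnd R F = eulerDerivation R (Fin 4) F + (2 : R) • F := rfl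

lemma omegaEnd_pow_apply (n : ℕ) (F : MvPolynomial (Fin 4) R) :
    (omegaEnd R ^ n) F = Omega^[n] F :=
  Module.End.pow_apply (omegaEnd R) n F

lemma bracketEnd_pow_apply (n : ℕ) (F : MvPolynomial (Fin 4) R) :
    (bracketEnd R ^ n) F = bracket ^ n * F := by
  rw [bracketEnd, LinearMap.pow_mulLeft, LinearMap.mulLeft_apply]

lemma mem_range_bracketEnd {F : MvPolynomial (Fin 4) R} :
    F ∈ LinearMap.range (bracketEnd R) ↔ F ∈ Ideal.span {bracket} := by
  simp [Ideal.mem_span_singleton, dvd_def, bracketEnd_apply, eq_comm]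

lemma lie_omegaEnd_bracketEnd : ⁅omegaEnd R, bracketEnd R⁆ = weightEnd R := by
  refine LinearMap.ext fun F ↦ ?_
  have pderiv_zero : pderiv 0 (bracket (k := R)) = X 3 := by simp [bracket, pderiv_X]
  have pderiv_one : pderiv 1 (bracket (k := R)) = -X 2 := by simp [bracket, pderiv_X]
  have pderiv_two : pderiv 2 (bracket (k := R)) = -X 1 := by simp [bracket, pderiv_X]
  have pderiv_three : pderiv 3 (bracket (k := R)) = X 0 := by simp [bracket, pderiv_X]
  simp only [Ring.lie_def, LinearMap.sub_apply, Module.End.mul_apply, omegaEnd_apply,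
    bracketEnd_apply, weightEnd_apply, Omega, pderiv_mul, map_add, map_neg, pderiv_zero,
    pderiv_one, pderiv_two, pderiv_three, pderiv_X_self, eulerDerivation_eq_sum,
    Fin.sum_univ_four, two_smul]
  ring

lemma lie_weightEnd_omegaEnd : ⁅weightEnd R, omegaEnd R⁆ = (-2 : R) • omegaEnd R := by
  refine LinearMap.ext fun F ↦ ?_
  simp only [Ring.lie_def, LinearMap.sub_apply, Module.End.mul_apply, LinearMap.smul_apply,
    omegaEnd_apply, weightEnd_apply, Omega, map_add, map_sub, map_smul, eulerDerivation_pderiv]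
  module

lemma eulerDerivation_bracket : eulerDerivation R (Fin 4) bracket = (2 : R) • bracket := by
  simp only [bracket, map_sub, Derivation.leibniz, eulerDerivation_X, smul_eq_mul, two_smul]
  ring

lemma lie_weightEnd_bracketEnd : ⁅weightEnd R, bracketEnd R⁆ = (2 : R) • bracketEnd R := by
  refine LinearMap.ext fun F ↦ ?_
  simp only [Ring.lie_def, LinearMap.sub_apply, Module.End.mul_apply, LinearMap.smul_apply,
    bracketEnd_apply, weightEnd_apply, Derivation.leibniz, eulerDerivation_bracket, smul_eq_mul,
    mul_add, mul_smul_comm, mul_comm F, smul_mul_assoc]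
  module

lemma weightEnd_apply_of_isHomogeneous {F : MvPolynomial (Fin 4) R} {d : ℕ}
    (hF : F.IsHomogeneous d) : weightEnd R F = ((d : R) + 2) • F := by
  rw [weightEnd_apply, eulerDerivation_of_isHomogeneous hF, ← add_smul]

/-- For `ℓ < m` the truncated `ℓ - m` is harmless: `ℓ.descFactorial m` vanishes. -/
theorem omega_evaluation_congruence_general {F : MvPolynomial (Fin 4) R} {d : ℕ}
    (hF : F.IsHomogeneous d) (ℓ m : ℕ) :
    Omega^[ℓ] (bracket ^ m * F) -
        C (ℓ.descFactorial m * (descPochhammer R m).eval ((d : R) + 2 * m + 1 - ℓ)) *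
          Omega^[ℓ - m] F ∈
      Ideal.span ({bracket} : Set (MvPolynomial (Fin 4) R)) := by
  have mem_range := pow_apply_pow_apply_sub_smul_mem_range lie_omegaEnd_bracketEnd
    lie_weightEnd_omegaEnd lie_weightEnd_bracketEnd (weightEnd_apply_of_isHomogeneous hF) ℓ m
  have weight_eq : (d : R) + 2 + 2 * m - 1 - ℓ = d + 2 * m + 1 - ℓ := by ring
  rwa [mem_range_bracketEnd, bracketEnd_pow_apply, omegaEnd_pow_apply, omegaEnd_pow_apply,
    smul_eq_C_mul, weight_eq] at mem_range

end Omega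

lemma isWeightedHomogeneous_add_weight {R σ N : Type*} [CommSemiring R] [AddCommMonoid N]
    {w₁ w₂ : σ → N} {n₁ n₂ : N} {F : MvPolynomial σ R} (h₁ : F.IsWeightedHomogeneous w₁ n₁)
    (h₂ : F.IsWeightedHomogeneous w₂ n₂) : F.IsWeightedHomogeneous (w₁ + w₂) (n₁ + n₂) := by
  intro s hs
  rw [← h₁ hs, ← h₂ hs]
  simp only [Finsupp.weight_apply, Pi.add_apply, smul_add, Finsupp.sum_add]

lemma Bihomogeneous.isHomogeneous {R : Type*} [CommRing R] {F : MvPolynomial (Fin 4) R} {p q : ℕ}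
    (hF : Bihomogeneous F p q) : F.IsHomogeneous (p + q) := by
  have weight_eq : (![1, 1, 0, 0] + ![0, 0, 1, 1] : Fin 4 → ℕ) = 1 := by decide
  rw [IsHomogeneous, ← weight_eq]
  exact isWeightedHomogeneous_add_weight hF.1 hF.2

lemma factorial_div_factorial_sub_eq_descFactorial {K : Type*} [DivisionRing K] [CharZero K]
    {n k : ℕ} (h : k ≤ n) : (n.factorial / (n - k).factorial : K) = n.descFactorial k := by
  rw [div_eq_iff (Nat.cast_ne_zero.2 (n - k).factorial_ne_zero), ← Nat.cast_mul, mul_comm,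
    Nat.factorial_mul_descFactorial h]

lemma ratCast_mu_eq_descFactorial_mul_descPochhammer {k : Type*} [Field k] [CharZero k]
    {p q ℓ m : ℕ} (hml : m ≤ ℓ) (hℓ : ℓ ≤ p + q + m + 1) :
    (mu p q ℓ m : k) =
      ℓ.descFactorial m * (descPochhammer k m).eval (((p + q : ℕ) : k) + 2 * m + 1 - ℓ) := by
  have sub_eq : p + q + m + 1 - ℓ = p + q + 2 * m + 1 - ℓ - m := by omega
  have cast_sub : ((p + q : ℕ) : k) + 2 * m + 1 - ℓ = (p + q + 2 * m + 1 - ℓ : ℕ) := by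
    rw [Nat.cast_sub (by omega)]
    push_cast
    rfl
  rw [mu, sub_eq, factorial_div_factorial_sub_eq_descFactorial hml,
    factorial_div_factorial_sub_eq_descFactorial (by omega), cast_sub,
    descPochhammer_eval_eq_descFactorial, ← Nat.cast_mul, ← Nat.cast_mul, Rat.cast_natCast]

/-- Congruence form of the evaluation lemma: for `𝒢` bihomogeneous of orders `(p,q)`
and `ℓ ≥ m ≥ 0` with `ℓ−m ≤ min(p,q)`,
`Ω_{xy}^ℓ((x y)^m·𝒢) − μ(p,q;ℓ,m)·Ω_{xy}^{ℓ−m}𝒢` lies in the ideal `((x y))`. -/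
theorem omega_evaluation_congruence {k : Type*} [Field k] [CharZero k]
    (G : MvPolynomial (Fin 4) k) (p q ℓ m : ℕ)
    (hml : m ≤ ℓ) (hlm : ℓ - m ≤ min p q)
    (hG : Bihomogeneous G p q) :
    Omega^[ℓ] (bracket ^ m * G) - C ((mu p q ℓ m : ℚ) : k) * Omega^[ℓ - m] G
      ∈ Ideal.span ({bracket} : Set (MvPolynomial (Fin 4) k)) := by
  rw [ratCast_mu_eq_descFactorial_mul_descPochhammer hml (by omega)]
  exact omega_evaluation_congruence_general hG.isHomogeneous ℓ m
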